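/- arXiv:quant-ph/0703033 — 2 statements merged into one kernel-verified Lean document; each statement's English description precedes it below -/
import Mathlib

section
/- (Forward direction of Lemma 1, bipartite form.) Let a_1, …, a_k be pairwise commuting unitary matrices on ℂ^{D₁} and b_1, …, b_k pairwise commuting unitary matrices on ℂ^{D₂}, with a_i^d = I and b_i^d = I for all i. Set g_i = a_i ⊗ b_i on ℂ^{D₁} ⊗ ℂ^{D₂} and let P_S = ∏_{i=1}^k (1/d) ∑_{j=0}^{d−1} g_i^j be the projection onto the subspace stabilized by g_1,…,g_k. If P_S ≠ 0, then the maximally mixed state ρ_S = P_S / tr(P_S) is separable across the cut ℂ^{D₁} : ℂ^{D₂}, i.e., there exist finitely many weights p_t > 0 with ∑_t p_t = 1 and unit vectors u_t ∈ ℂ^{D₁}, v_t ∈ ℂ^{D₂} such that ρ_S = ∑_t p_t (|u_t⟩⟨u_t|) ⊗ (|v_t⟩⟨v_t|). -/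
open Matrix Kronecker

/-!
Commuting normal matrices are simultaneously unitarily diagonalizable (by Fuglede's theorem their
real and imaginary parts all commute), so all `a i` are diagonal in one orthonormal basis `(u s)` of
`ℂ^{D₁}` and all `b i` in one orthonormal basis `(v t)` of `ℂ^{D₂}`. Every `a i ⊗ₖ b i`, hence also
`P_S`, is then diagonal in the product basis `u s ⊗ v t`. As `P_S` is idempotent, its eigenvalues
are `0` and `1`, so `P_S / tr P_S` is the uniform mixture of the product states
`|u s⟩⟨u s| ⊗ |v t⟩⟨v t|` with eigenvalue `1`.
-/

section StabilizerProjection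

/-- The mean `(1/d) ∑_{j < d} x ^ j`. If `x ^ d = 1`, it is the projection onto the vectors fixed
by `x`. -/
def cyclicMean (K : Type*) {A : Type*} [Field K] [Ring A] [Algebra K A] (d : ℕ) (x : A) : A :=
  (d : K)⁻¹ • ∑ j ∈ Finset.range d, x ^ j

/-- The projection `∏_i (1/d) ∑_{j < d} g_i ^ j` onto the subspace stabilized by `g_1, …, g_k`. The
product is taken in the order of the indices, so that no commutativity is needed to define it. -/
def stabilizerProjection (K : Type*) {A : Type*} [Field K] [Ring A] [Algebra K A] {k : ℕ} (d : ℕ)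
    (g : Fin k → A) : A :=
  (List.ofFn fun i => cyclicMean K d (g i)).prod

variable {K A B : Type*} [Field K] [Ring A] [Algebra K A] [Ring B] [Algebra K B] {d k : ℕ}

theorem map_cyclicMean (f : A →ₐ[K] B) (d : ℕ) (x : A) :
    f (cyclicMean K d x) = cyclicMean K d (f x) := by
  simp only [cyclicMean, map_smul, map_sum, map_pow]

theorem map_stabilizerProjection (f : A →ₐ[K] B) (d : ℕ) (g : Fin k → A) :
    f (stabilizerProjection K d g) = stabilizerProjection K d fun i => f (g i) := by
  simp only [stabilizerProjection, map_list_prod, List.map_ofFn, Function.comp_def, map_cyclicMean]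

theorem mul_cyclicMean_of_pow_eq_one {x : A} (hx : x ^ d = 1) :
    x * cyclicMean K d x = cyclicMean K d x := by
  have h : (x - 1) * ∑ j ∈ Finset.range d, x ^ j = 0 := by rw [mul_geom_sum, hx, sub_self]
  rw [cyclicMean, mul_smul_comm, ← sub_eq_zero, ← smul_sub, ← sub_one_mul, h, smul_zero]

theorem isIdempotentElem_cyclicMean [CharZero K] (hd : d ≠ 0) {x : A} (hx : x ^ d = 1) :
    IsIdempotentElem (cyclicMean K d x) := by
  have pow_mul_mean (j : ℕ) : x ^ j * cyclicMean K d x = cyclicMean K d x := by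
    induction j with
    | zero => rw [pow_zero, one_mul]
    | succ j ih => rw [pow_succ, mul_assoc, mul_cyclicMean_of_pow_eq_one hx, ih]
  calc cyclicMean K d x * cyclicMean K d x
      = (d : K)⁻¹ • ∑ j ∈ Finset.range d, x ^ j * cyclicMean K d x := by
        rw [← Finset.sum_mul, ← smul_mul_assoc, ← cyclicMean]
    _ = (d : K)⁻¹ • (d : K) • cyclicMean K d x := by
        simp only [pow_mul_mean, Finset.sum_const, Finset.card_range, Nat.cast_smul_eq_nsmul]
    _ = cyclicMean K d x := inv_smul_smul₀ (Nat.cast_ne_zero.mpr hd) _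

theorem isIdempotentElem_stabilizerProjection {R : Type*} [CommRing R] [Algebra K R] [CharZero K]
    (hd : d ≠ 0) {g : Fin k → R} (hg : ∀ i, g i ^ d = 1) :
    IsIdempotentElem (stabilizerProjection K d g) := by
  rw [IsIdempotentElem, stabilizerProjection, List.prod_ofFn, ← Finset.prod_mul_distrib]
  exact Finset.prod_congr rfl fun i _ => isIdempotentElem_cyclicMean hd (hg i)

end StabilizerProjection

theorem kronecker_pow {R m n : Type*} [CommSemiring R] [Fintype m] [DecidableEq m] [Fintype n]
    [DecidableEq n] (A : Matrix m m R) (B : Matrix n n R) (j : ℕ) :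
    (A ⊗ₖ B) ^ j = (A ^ j) ⊗ₖ (B ^ j) := by
  induction j with
  | zero => simp only [pow_zero, one_kronecker_one]
  | succ j ih => rw [pow_succ, ih, ← mul_kronecker_mul, pow_succ, pow_succ]

/-- The rank-one operator `|v⟩⟨v|`, a density matrix if `v` is a unit vector. -/
def pureState {𝕜 n : Type*} [Mul 𝕜] [Star 𝕜] (v : n → 𝕜) : Matrix n n 𝕜 :=
  vecMulVec v (star v)

section Diagonalization

theorem exists_orthonormalBasis_apply_eq_smul {ι n 𝕜 E : Type*} [Fintype n] [RCLike 𝕜]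
    [NormedAddCommGroup E] [InnerProductSpace 𝕜 E] [FiniteDimensional 𝕜 E]
    (hn : Module.finrank 𝕜 E = Fintype.card n) {T : ι → E →ₗ[𝕜] E}
    (hT : ∀ i, (T i).IsSymmetric) (hC : ∀ i j, Commute (T i) (T j)) :
    ∃ (b : OrthonormalBasis n 𝕜 E) (μ : ι → n → 𝕜), ∀ i s, T i (b s) = μ i s • b s := by
  classical
  let V (γ : ι → 𝕜) : Submodule 𝕜 E := ⨅ i, Module.End.eigenspace (T i) (γ i)
  have internal : DirectSum.IsInternal V :=
    LinearMap.IsSymmetric.directSum_isInternal_of_pairwise_commute hT fun i j _ => hC i j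
  have orthogonal : OrthogonalFamily 𝕜 (fun γ => V γ) fun γ => (V γ).subtypeₗᵢ :=
    LinearMap.IsSymmetric.orthogonalFamily_iInf_eigenspaces hT
  -- Only finitely many joint eigenspaces are nonzero; the basis is assembled from those.
  let _ := internal.submodule_iSupIndep.fintypeNeBotOfFiniteDimensional
  have internal' := DirectSum.isInternal_ne_bot_iff.mpr internal
  have orthogonal' := orthogonal.comp (Subtype.val_injective (p := fun γ => V γ ≠ ⊥))
  let e := (Fintype.equivFin n).symm
  refine ⟨(internal'.subordinateOrthonormalBasis hn orthogonal').reindex e, fun i s =>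
    (internal'.subordinateOrthonormalBasisIndex hn (e.symm s) orthogonal').1 i, fun i s => ?_⟩
  have mem := internal'.subordinateOrthonormalBasis_subordinate hn (e.symm s) orthogonal'
  rw [OrthonormalBasis.reindex_apply]
  exact Module.End.mem_eigenspace_iff.mp ((Submodule.mem_iInf _).mp mem i)

variable {ι 𝕜 m n : Type*} [RCLike 𝕜] [Fintype m] [DecidableEq m] [Fintype n] [DecidableEq n]

/-- The algebra of matrices that are diagonal in the orthonormal basis formed by the columns of `U`,
parametrized by their eigenvalues. -/
def unitaryDiagonal (U : unitaryGroup n 𝕜) : (n → 𝕜) →ₐ[𝕜] Matrix n n 𝕜 :=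
  (Unitary.conjStarAlgAut 𝕜 _ U).toAlgEquiv.toAlgHom.comp (diagonalAlgHom 𝕜)

theorem unitaryDiagonal_apply (U : unitaryGroup n 𝕜) (c : n → 𝕜) :
    unitaryDiagonal U c = U * diagonal c * star (U : Matrix n n 𝕜) :=
  rfl

theorem unitaryDiagonal_injective (U : unitaryGroup n 𝕜) :
    Function.Injective (unitaryDiagonal U) :=
  (Unitary.conjStarAlgAut 𝕜 _ U).injective.comp diagonal_injective

theorem trace_unitaryDiagonal (U : unitaryGroup n 𝕜) (c : n → 𝕜) :
    (unitaryDiagonal U c).trace = ∑ s, c s := by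
  rw [unitaryDiagonal_apply, trace_mul_cycle, Unitary.coe_star_mul_self, one_mul, trace_diagonal]

theorem unitaryDiagonal_eq_sum_pureState (U : unitaryGroup n 𝕜) (c : n → 𝕜) :
    unitaryDiagonal U c = ∑ s, c s • pureState (U.1.col s) := by
  ext x y
  rw [unitaryDiagonal_apply, mul_apply]
  simp only [mul_diagonal, Matrix.sum_apply, Matrix.smul_apply, pureState, vecMulVec_apply,
    star_apply, Pi.star_apply, col_apply, smul_eq_mul]
  exact Finset.sum_congr rfl fun s _ => by ring

theorem star_col_dotProduct_col_self (U : unitaryGroup n 𝕜) (s : n) :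
    star (U.1.col s) ⬝ᵥ U.1.col s = 1 := by
  have h : (star U.1 * U.1) s s = 1 := by rw [Unitary.coe_star_mul_self, one_apply_eq]
  exact h

/-- The Kronecker product of unitary matrices, as an element of the unitary group. -/
def unitaryKronecker (U : unitaryGroup m 𝕜) (V : unitaryGroup n 𝕜) : unitaryGroup (m × n) 𝕜 :=
  ⟨U ⊗ₖ V, kronecker_mem_unitary U.2 V.2⟩

theorem unitaryDiagonal_kronecker (U : unitaryGroup m 𝕜) (V : unitaryGroup n 𝕜) (x : m → 𝕜)
    (y : n → 𝕜) :
    unitaryDiagonal U x ⊗ₖ unitaryDiagonal V y =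
      unitaryDiagonal (unitaryKronecker U V) fun q => x q.1 * y q.2 := by
  simp only [unitaryDiagonal_apply, unitaryKronecker, mul_kronecker_mul, star_eq_conjTranspose,
    conjTranspose_kronecker, diagonal_kronecker_diagonal]

theorem pureState_col_unitaryKronecker (U : unitaryGroup m 𝕜) (V : unitaryGroup n 𝕜) (q : m × n) :
    pureState ((unitaryKronecker U V).1.col q) =
      pureState (U.1.col q.1) ⊗ₖ pureState (V.1.col q.2) := by
  ext x y
  simp only [pureState, unitaryKronecker, vecMulVec_apply, kroneckerMap_apply, Pi.star_apply,
    col_apply, star_mul', mul_mul_mul_comm]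

theorem exists_eq_unitaryDiagonal_of_isHermitian {A : ι → Matrix n n 𝕜}
    (hA : ∀ i, (A i).IsHermitian) (hC : ∀ i j, Commute (A i) (A j)) :
    ∃ (U : unitaryGroup n 𝕜) (μ : ι → n → 𝕜), ∀ i, A i = unitaryDiagonal U (μ i) := by
  obtain ⟨b, μ, hb⟩ := exists_orthonormalBasis_apply_eq_smul (finrank_euclideanSpace (ι := n))
    (fun i => isSymmetric_toEuclideanLin_iff.mpr (hA i))
    fun i j => (hC i j).map (toLpLinAlgEquiv (R := 𝕜) 2)
  let U : unitaryGroup n 𝕜 := ⟨(EuclideanSpace.basisFun n 𝕜).toBasis.toMatrix b.toBasis,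
    (EuclideanSpace.basisFun n 𝕜).toMatrix_orthonormalBasis_mem_unitary b⟩
  refine ⟨U, μ, fun i => ?_⟩
  have intertwine : A i * U = U * diagonal (μ i) := by
    ext x s
    rw [mul_diagonal, mul_comm]
    exact congrArg (fun z => z x) (hb i s)
  rw [unitaryDiagonal_apply, ← intertwine, mul_assoc, Unitary.mul_star_self_of_mem U.2, mul_one]

end Diagonalization

section Normal

open scoped ComplexStarModule

variable {A : Type*} [NonUnitalCStarAlgebra A] {x y : A}

theorem commute_realPart_of_isStarNormal (hx : IsStarNormal x) (h : Commute x y) :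
    Commute (ℜ x : A) y := by
  rw [realPart_apply_coe]
  exact (h.add_left (hx.commute_star_left h)).smul_left _

theorem commute_imaginaryPart_of_isStarNormal (hx : IsStarNormal x) (h : Commute x y) :
    Commute (ℑ x : A) y := by
  rw [imaginaryPart_apply_coe]
  exact ((h.sub_left (hx.commute_star_left h)).smul_left _).smul_left _

-- The operator norm serves only to make Fuglede's theorem for C⋆-algebras available.
open scoped Matrix.Norms.L2Operator in
theorem exists_eq_unitaryDiagonal_of_isStarNormal {ι n : Type*} [Fintype n] [DecidableEq n]
    {A : ι → Matrix n n ℂ} (hA : ∀ i, IsStarNormal (A i)) (hC : ∀ i j, Commute (A i) (A j)) :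
    ∃ (U : unitaryGroup n ℂ) (μ : ι → n → ℂ), ∀ i, A i = unitaryDiagonal U (μ i) := by
  let parts : ι ⊕ ι → Matrix n n ℂ := Sum.elim (fun i => ℜ (A i)) fun i => ℑ (A i)
  have parts_hermitian : ∀ r, (parts r).IsHermitian := by
    rintro (i | i)
    · exact (ℜ (A i)).2
    · exact (ℑ (A i)).2
  have re_commute (i j) : Commute (A i) (ℜ (A j) : Matrix n n ℂ) :=
    (commute_realPart_of_isStarNormal (hA j) (hC j i)).symm
  have im_commute (i j) : Commute (A i) (ℑ (A j) : Matrix n n ℂ) :=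
    (commute_imaginaryPart_of_isStarNormal (hA j) (hC j i)).symm
  have parts_commute : ∀ r s, Commute (parts r) (parts s) := by
    rintro (i | i) (j | j)
    · exact commute_realPart_of_isStarNormal (hA i) (re_commute i j)
    · exact commute_realPart_of_isStarNormal (hA i) (im_commute i j)
    · exact commute_imaginaryPart_of_isStarNormal (hA i) (re_commute i j)
    · exact commute_imaginaryPart_of_isStarNormal (hA i) (im_commute i j)
  obtain ⟨U, μ, hμ⟩ := exists_eq_unitaryDiagonal_of_isHermitian parts_hermitian parts_commute
  refine ⟨U, fun i => μ (.inl i) + Complex.I • μ (.inr i), fun i => ?_⟩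
  rw [map_add, map_smul, ← hμ, ← hμ]
  exact (realPart_add_I_smul_imaginaryPart (A i)).symm

end Normal

section Separable

variable {m n : Type*}

/-- Separability of a state on `ℂ^m ⊗ ℂ^n` across the cut `ℂ^m : ℂ^n`: it is a finite mixture of
products of pure states, with strictly positive weights. -/
def IsSeparableState [Fintype m] [Fintype n] (ρ : Matrix (m × n) (m × n) ℂ) : Prop :=
  ∃ (N : ℕ) (p : Fin N → ℝ) (u : Fin N → m → ℂ) (v : Fin N → n → ℂ),
    (∀ t, 0 < p t) ∧ (∑ t, p t = 1) ∧
    (∀ t, star (u t) ⬝ᵥ u t = 1) ∧ (∀ t, star (v t) ⬝ᵥ v t = 1) ∧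
    ρ = ∑ t, (p t : ℂ) • (pureState (u t) ⊗ₖ pureState (v t))

variable [Fintype m] [Fintype n]

theorem isSeparableState_sum {ι : Type*} [Fintype ι] {p : ι → ℝ} {u : ι → m → ℂ} {v : ι → n → ℂ}
    (hp : ∀ i, 0 ≤ p i) (hsum : ∑ i, p i = 1) (hu : ∀ i, star (u i) ⬝ᵥ u i = 1)
    (hv : ∀ i, star (v i) ⬝ᵥ v i = 1) :
    IsSeparableState (∑ i, (p i : ℂ) • (pureState (u i) ⊗ₖ pureState (v i))) := by
  classical
  let S : Finset ι := {i | p i ≠ 0}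
  let e := S.equivFin.symm
  refine ⟨S.card, fun t => p (e t), fun t => u (e t), fun t => v (e t),
    fun t => (hp _).lt_of_ne' (Finset.mem_filter.mp (e t).2).2, ?_, fun t => hu _, fun t => hv _,
    ?_⟩
  · rw [e.sum_comp fun i : S => p i, S.sum_coe_sort p, Finset.sum_filter_ne_zero, hsum]
  · rw [e.sum_comp fun i : S => (p i : ℂ) • (pureState (u i) ⊗ₖ pureState (v i)),
      S.sum_coe_sort fun i => (p i : ℂ) • (pureState (u i) ⊗ₖ pureState (v i)),
      Finset.sum_filter_of_ne]
    rintro i - h hpi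
    exact h (by rw [hpi, Complex.ofReal_zero, zero_smul])

variable [DecidableEq m] [DecidableEq n]

theorem isSeparableState_inv_trace_smul_of_eq_unitaryDiagonal (U : unitaryGroup m ℂ)
    (V : unitaryGroup n ℂ) {w : m × n → ℝ} (hw : 0 ≤ w) (hne : w ≠ 0)
    {ρ : Matrix (m × n) (m × n) ℂ}
    (hρ : ρ = unitaryDiagonal (unitaryKronecker U V) fun q => (w q : ℂ)) :
    IsSeparableState (ρ.trace⁻¹ • ρ) := by
  have total_ne : ∑ q, w q ≠ 0 := by
    rwa [Ne, Fintype.sum_eq_zero_iff_of_nonneg hw]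
  have mixture : ρ.trace⁻¹ • ρ = ∑ q, (((∑ r, w r)⁻¹ * w q : ℝ) : ℂ) •
      (pureState (U.1.col q.1) ⊗ₖ pureState (V.1.col q.2)) := by
    rw [hρ, trace_unitaryDiagonal, unitaryDiagonal_eq_sum_pureState, Finset.smul_sum]
    simp only [pureState_col_unitaryKronecker, smul_smul, Complex.ofReal_mul, Complex.ofReal_inv,
      Complex.ofReal_sum]
  rw [mixture]
  refine isSeparableState_sum (fun q => ?_) ?_ (fun q => star_col_dotProduct_col_self U q.1)
    fun q => star_col_dotProduct_col_self V q.2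
  · exact mul_nonneg (inv_nonneg.mpr (Finset.sum_nonneg fun r _ => hw r)) (hw q)
  · rw [← Finset.mul_sum, inv_mul_cancel₀ total_ne]

end Separable

theorem exists_nonneg_eq_ofReal_of_isIdempotentElem {ι : Type*} {c : ι → ℂ}
    (hc : IsIdempotentElem c) : ∃ w : ι → ℝ, 0 ≤ w ∧ c = fun q => (w q : ℂ) := by
  have zero_or_one (q : ι) : c q = 0 ∨ c q = 1 :=
    IsIdempotentElem.iff_eq_zero_or_one.mp (congrFun hc q)
  refine ⟨fun q => (c q).re, fun q => ?_, funext fun q => ?_⟩ <;>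
    rcases zero_or_one q with h | h <;> simp [h]

theorem stabilized_state_separable_general {m n : Type*} [Fintype m] [DecidableEq m] [Fintype n]
    [DecidableEq n] {d k : ℕ} (hd : d ≠ 0) {a : Fin k → Matrix m m ℂ} {b : Fin k → Matrix n n ℂ}
    (haN : ∀ i, IsStarNormal (a i)) (hbN : ∀ i, IsStarNormal (b i))
    (haC : ∀ i j, Commute (a i) (a j)) (hbC : ∀ i j, Commute (b i) (b j))
    (hg : ∀ i, (a i ⊗ₖ b i) ^ d = 1) {PS : Matrix (m × n) (m × n) ℂ}
    (hPS : PS = stabilizerProjection ℂ d fun i => a i ⊗ₖ b i) (hne : PS ≠ 0) :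
    IsSeparableState (PS.trace⁻¹ • PS) := by
  obtain ⟨U, α, hα⟩ := exists_eq_unitaryDiagonal_of_isStarNormal haN haC
  obtain ⟨V, β, hβ⟩ := exists_eq_unitaryDiagonal_of_isStarNormal hbN hbC
  let Φ := unitaryDiagonal (unitaryKronecker U V)
  let γ (i : Fin k) (q : m × n) : ℂ := α i q.1 * β i q.2
  have hγ (i) : a i ⊗ₖ b i = Φ (γ i) := by rw [hα, hβ, unitaryDiagonal_kronecker]
  have hγd (i) : γ i ^ d = 1 :=
    unitaryDiagonal_injective _ (by rw [map_pow, ← hγ, hg, map_one])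
  obtain ⟨w, hw, hcw⟩ := exists_nonneg_eq_ofReal_of_isIdempotentElem
    (isIdempotentElem_stabilizerProjection (K := ℂ) hd hγd)
  have hPSw : PS = Φ fun q => (w q : ℂ) := by
    simp only [hPS, hγ, ← map_stabilizerProjection, hcw]
  have hw_ne : w ≠ 0 := by
    rintro rfl
    exact hne (by simpa only [Pi.zero_apply, Complex.ofReal_zero] using! hPSw.trans (map_zero Φ))
  exact isSeparableState_inv_trace_smul_of_eq_unitaryDiagonal U V hw hw_ne hPSw

/-- Forward direction of Lemma 1, bipartite form: if `g_i = a_i ⊗ b_i` for pairwise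
commuting unitaries `a_i` on `ℂ^{D₁}` and `b_i` on `ℂ^{D₂}` with `a_i^d = b_i^d = 1`,
and `P_S = ∏_i (1/d) ∑_j g_i^j ≠ 0` is the projection onto the stabilized subspace,
then the maximally mixed state `ρ_S = P_S / tr(P_S)` is separable across `ℂ^{D₁} : ℂ^{D₂}`. -/
theorem stabilized_state_separable (D1 D2 d k : ℕ)
    (hD1 : 0 < D1) (hD2 : 0 < D2) (hd : 0 < d) (hk : 0 < k)
    (a : Fin k → Matrix (Fin D1) (Fin D1) ℂ) (b : Fin k → Matrix (Fin D2) (Fin D2) ℂ)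
    (haU : ∀ i, a i * (a i)ᴴ = 1 ∧ (a i)ᴴ * a i = 1)
    (hbU : ∀ i, b i * (b i)ᴴ = 1 ∧ (b i)ᴴ * b i = 1)
    (haC : ∀ i j, a i * a j = a j * a i) (hbC : ∀ i j, b i * b j = b j * b i)
    (had : ∀ i, a i ^ d = 1) (hbd : ∀ i, b i ^ d = 1)
    (PS : Matrix (Fin D1 × Fin D2) (Fin D1 × Fin D2) ℂ)
    (hPS : PS = (List.ofFn fun i =>
      (d : ℂ)⁻¹ • ∑ j ∈ Finset.range d, (a i ⊗ₖ b i) ^ j).prod)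
    (hne : PS ≠ 0) :
    ∃ (m : ℕ) (p : Fin m → ℝ) (u : Fin m → (Fin D1 → ℂ)) (v : Fin m → (Fin D2 → ℂ)),
      (∀ t, 0 < p t) ∧ (∑ t, p t = 1) ∧
      (∀ t, star (u t) ⬝ᵥ u t = 1) ∧ (∀ t, star (v t) ⬝ᵥ v t = 1) ∧
      PS.trace⁻¹ • PS =
        ∑ t, (p t : ℂ) •
          (vecMulVec (u t) (star (u t)) ⊗ₖ vecMulVec (v t) (star (v t))) :=
  stabilized_state_separable_general hd.ne'
    (fun i => isStarNormal_of_mem_unitary ⟨(haU i).2, (haU i).1⟩)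
    (fun i => isStarNormal_of_mem_unitary ⟨(hbU i).2, (hbU i).1⟩) haC hbC
    (fun i => by rw [kronecker_pow, had, hbd, one_kronecker_one]) hPS hne
end

section
/- The four-qubit Smolin state ρ^(4) is separable with respect to the 2:2 partition {1,2}:{3,4}: there exist finitely many weights p_t > 0 with ∑_t p_t = 1 and unit vectors u_t, v_t ∈ ℂ²⊗ℂ² such that ρ^(4) = ∑_t p_t (|u_t⟩⟨u_t|) ⊗ (|v_t⟩⟨v_t|), where the first factor acts on qubits 1,2 and the second on qubits 3,4. -/
open Matrix Kronecker

/-- The qubit Pauli `X = |0⟩⟨1| + |1⟩⟨0|`. -/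
def qubitX : Matrix (Fin 2) (Fin 2) ℂ := !![0, 1; 1, 0]

/-- The qubit Pauli `Z = |0⟩⟨0| - |1⟩⟨1|`. -/
def qubitZ : Matrix (Fin 2) (Fin 2) ℂ := !![1, 0; 0, -1]

/-!
The operators `X ⊗ X` and `Z ⊗ Z` commute and square to the identity, and the four Bell vectors
are their joint eigenvectors, one for each pair of signs. Hence the projector onto the Bell vector
with signs `s, t` is `P s t = (1/4) (1 + s X ⊗ X) (1 + t Z ⊗ Z)`. In the sum of `P s t ⊗ P s t` over
all signs the mixed-product rule separates `s` from `t`, and in each of the two resulting factors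
the terms linear in the sign cancel, leaving four times the Smolin state. The latter is
therefore the uniform mixture, over the four Bell states, of two copies of the same Bell state.
-/

section Kronecker

variable {R l m n p : Type*} [CommRing R]

lemma sum_neg_one_pow_smul_kronecker (A A' : Matrix l m R) (B B' : Matrix n p R) :
    ∑ a : Fin 2, (A + (-1 : R) ^ (a : ℕ) • A') ⊗ₖ (B + (-1 : R) ^ (a : ℕ) • B') =
      (2 : R) • (A ⊗ₖ B + A' ⊗ₖ B') := by
  simp only [Fin.sum_univ_two, Fin.val_zero, Fin.val_one, pow_zero, pow_one, add_kronecker,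
    kronecker_add, smul_kronecker, kronecker_smul]
  module

lemma sum_sum_neg_one_pow_smul_mul_kronecker [Fintype m] [DecidableEq m] [Fintype n]
    [DecidableEq n] (A A' : Matrix m m R) (B B' : Matrix n n R) :
    ∑ a : Fin 2, ∑ b : Fin 2,
        ((1 + (-1 : R) ^ (a : ℕ) • A) * (1 + (-1 : R) ^ (b : ℕ) • A')) ⊗ₖ
          ((1 + (-1 : R) ^ (a : ℕ) • B) * (1 + (-1 : R) ^ (b : ℕ) • B')) =
      (4 : R) • ((1 + A ⊗ₖ B) * (1 + A' ⊗ₖ B')) := by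
  simp only [mul_kronecker_mul, ← Finset.sum_mul_sum, sum_neg_one_pow_smul_kronecker,
    one_kronecker_one, smul_mul_smul_comm]
  norm_num

end Kronecker

lemma vecMulVec_add_add_of_mulVec_swap {R m n : Type*} [CommSemiring R] [Fintype m]
    [DecidableEq m] {S : Matrix m m R} {e f : m → R} (hef : S *ᵥ e = f) (hfe : S *ᵥ f = e)
    (w z : n → R) :
    vecMulVec (e + f) (w + z) = (1 + S) * (vecMulVec e w + vecMulVec f z) := by
  have he : (1 + S) *ᵥ e = e + f := by rw [add_mulVec, one_mulVec, hef]
  have hf : (1 + S) *ᵥ f = e + f := by rw [add_mulVec, one_mulVec, hfe, add_comm]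
  rw [Matrix.mul_add, mul_vecMulVec, mul_vecMulVec, he, hf, vecMulVec_add]

lemma qubitX_apply (i j : Fin 2) : qubitX i j = if i = j + 1 then 1 else 0 := by
  fin_cases i <;> fin_cases j <;> rfl

lemma qubitZ_eq_diagonal : qubitZ = diagonal fun i : Fin 2 => (-1) ^ (i : ℕ) := by
  ext i j
  fin_cases i <;> fin_cases j <;> simp [qubitZ]

lemma qubitX_kronecker_qubitX_mulVec_single (i j : Fin 2) :
    (qubitX ⊗ₖ qubitX) *ᵥ Pi.single (i, j) 1 = Pi.single (i + 1, j + 1) 1 := by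
  ext x
  simp [qubitX_apply, Pi.single_apply, Prod.ext_iff, ← ite_and, and_comm]

lemma one_add_neg_one_pow_smul_qubitZ_kronecker_qubitZ (b : Fin 2) :
    1 + (-1 : ℂ) ^ (b : ℕ) • (qubitZ ⊗ₖ qubitZ) =
      (2 : ℂ) • (single (0, b) (0, b) 1 + single (1, b + 1) (1, b + 1) 1) := by
  rw [qubitZ_eq_diagonal, diagonal_kronecker_diagonal, ← diagonal_one, ← diagonal_smul,
    diagonal_add, ← diagonal_single, ← diagonal_single, diagonal_add, ← diagonal_smul]
  congr 1
  ext ⟨i, j⟩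
  fin_cases b <;> fin_cases i <;> fin_cases j <;>
    norm_num [Pi.single_apply, show (1 + 1 : Fin 2) = 0 from rfl]

/-- The Bell vector `(|0, b⟩ + (-1)ᵃ |1, b + 1⟩) / √2`, with `b + 1` taken modulo 2:
the joint eigenvector of `X ⊗ X` and `Z ⊗ Z` with eigenvalues `(-1)ᵃ` and `(-1)ᵇ`. -/
noncomputable def bellVec (a b : Fin 2) : Fin 2 × Fin 2 → ℂ :=
  ((√2 : ℝ) : ℂ)⁻¹ • (Pi.single (0, b) 1 + (-1 : ℂ) ^ (a : ℕ) • Pi.single (1, b + 1) 1)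

lemma inv_sqrt_two_mul_self : ((√2 : ℝ) : ℂ)⁻¹ * ((√2 : ℝ) : ℂ)⁻¹ = 1 / 2 := by
  rw [← mul_inv, ← Complex.ofReal_mul, Real.mul_self_sqrt zero_le_two]
  norm_num

lemma star_bellVec (a b : Fin 2) : star (bellVec a b) = bellVec a b := by
  simp [bellVec]

lemma star_bellVec_dotProduct_bellVec (a b : Fin 2) : star (bellVec a b) ⬝ᵥ bellVec a b = 1 := by
  rw [star_bellVec, bellVec, smul_dotProduct, dotProduct_smul, smul_smul, inv_sqrt_two_mul_self]
  norm_num [← mul_pow]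

lemma vecMulVec_bellVec (a b : Fin 2) :
    vecMulVec (bellVec a b) (star (bellVec a b)) =
      (1 / 4 : ℂ) • ((1 + (-1 : ℂ) ^ (a : ℕ) • (qubitX ⊗ₖ qubitX)) *
        (1 + (-1 : ℂ) ^ (b : ℕ) • (qubitZ ⊗ₖ qubitZ))) := by
  have sign_mul_self : (-1 : ℂ) ^ (a : ℕ) * (-1) ^ (a : ℕ) = 1 := by simp [← mul_pow]
  let S : Matrix (Fin 2 × Fin 2) (Fin 2 × Fin 2) ℂ := (-1 : ℂ) ^ (a : ℕ) • (qubitX ⊗ₖ qubitX)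
  let e : Fin 2 × Fin 2 → ℂ := Pi.single (0, b) 1
  let f : Fin 2 × Fin 2 → ℂ := Pi.single (1, b + 1) 1
  have hef : S *ᵥ e = (-1 : ℂ) ^ (a : ℕ) • f := by
    rw [smul_mulVec, qubitX_kronecker_qubitX_mulVec_single, zero_add]
  have hfe : S *ᵥ ((-1 : ℂ) ^ (a : ℕ) • f) = e := by
    rw [smul_mulVec, mulVec_smul, qubitX_kronecker_qubitX_mulVec_single, smul_smul,
      sign_mul_self, one_smul, add_assoc, show (1 + 1 : Fin 2) = 0 from rfl, add_zero]
  have basis_projectors : vecMulVec e e + vecMulVec f f =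
      (1 / 2 : ℂ) • (1 + (-1 : ℂ) ^ (b : ℕ) • (qubitZ ⊗ₖ qubitZ)) := by
    rw [one_add_neg_one_pow_smul_qubitZ_kronecker_qubitZ, smul_smul,
      single_eq_single_vecMulVec_single, single_eq_single_vecMulVec_single]
    norm_num [e, f]
  calc vecMulVec (bellVec a b) (star (bellVec a b))
    _ = (1 / 2 : ℂ) • vecMulVec (e + (-1 : ℂ) ^ (a : ℕ) • f) (e + (-1 : ℂ) ^ (a : ℕ) • f) := by
      rw [star_bellVec, bellVec, smul_vecMulVec, vecMulVec_smul, smul_smul, inv_sqrt_two_mul_self]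
    _ = (1 / 2 : ℂ) • ((1 + S) * (vecMulVec e e + vecMulVec f f)) := by
      rw [vecMulVec_add_add_of_mulVec_swap hef hfe, smul_vecMulVec, vecMulVec_smul, smul_smul,
        sign_mul_self, one_smul]
    _ = (1 / 4 : ℂ) • ((1 + (-1 : ℂ) ^ (a : ℕ) • (qubitX ⊗ₖ qubitX)) *
        (1 + (-1 : ℂ) ^ (b : ℕ) • (qubitZ ⊗ₖ qubitZ))) := by
      rw [basis_projectors, mul_smul_comm, smul_smul]
      norm_num [S]

lemma sum_bellVec_kronecker_bellVec :
    ∑ a, ∑ b, (1 / 4 : ℂ) • (vecMulVec (bellVec a b) (star (bellVec a b)) ⊗ₖ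
        vecMulVec (bellVec a b) (star (bellVec a b))) =
      (1 / 16 : ℂ) • ((1 + (qubitX ⊗ₖ qubitX) ⊗ₖ (qubitX ⊗ₖ qubitX)) *
        (1 + (qubitZ ⊗ₖ qubitZ) ⊗ₖ (qubitZ ⊗ₖ qubitZ))) := by
  simp only [vecMulVec_bellVec, smul_kronecker, kronecker_smul, ← Finset.smul_sum,
    sum_sum_neg_one_pow_smul_mul_kronecker, smul_smul]
  norm_num

/-- The four-qubit Smolin state `ρ⁽⁴⁾ = (1/16)(I + X⊗X⊗X⊗X)(I + Z⊗Z⊗Z⊗Z)` is separable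
with respect to the 2:2 partition `{1,2} : {3,4}`: it is a finite convex combination of
tensor products of rank-one density matrices `|u⟩⟨u| ⊗ |v⟩⟨v|` with `u, v` unit vectors. -/
theorem smolin_separable_12_34
    (ρ : Matrix ((Fin 2 × Fin 2) × (Fin 2 × Fin 2)) ((Fin 2 × Fin 2) × (Fin 2 × Fin 2)) ℂ)
    (hρ : ρ = (1 / 16 : ℂ) •
        ((1 + (qubitX ⊗ₖ qubitX) ⊗ₖ (qubitX ⊗ₖ qubitX)) *
          (1 + (qubitZ ⊗ₖ qubitZ) ⊗ₖ (qubitZ ⊗ₖ qubitZ)))) :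
    ∃ (m : ℕ) (p : Fin m → ℝ) (u v : Fin m → (Fin 2 × Fin 2 → ℂ)),
      (∀ t, 0 < p t) ∧ (∑ t, p t = 1) ∧
      (∀ t, star (u t) ⬝ᵥ u t = 1) ∧ (∀ t, star (v t) ⬝ᵥ v t = 1) ∧
      ρ = ∑ t, (p t : ℂ) •
        (vecMulVec (u t) (star (u t)) ⊗ₖ vecMulVec (v t) (star (v t))) := by
  let e : Fin 4 ≃ Fin 2 × Fin 2 := (finProdFinEquiv (m := 2) (n := 2)).symm
  refine ⟨4, fun _ => 1 / 4, fun t => bellVec (e t).1 (e t).2, fun t => bellVec (e t).1 (e t).2,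
    fun _ => by norm_num, by norm_num, fun _ => star_bellVec_dotProduct_bellVec _ _,
    fun _ => star_bellVec_dotProduct_bellVec _ _, ?_⟩
  rw [hρ, ← sum_bellVec_kronecker_bellVec, ← Fintype.sum_prod_type', ← e.sum_comp]
  norm_num
end
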